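/- arXiv:2408.12678 — 3 statements merged into one kernel-verified Lean document; each statement's English description precedes it below -/
import Mathlib

section
/- Let R be a commutative ring, k ≥ 2, A a k×k matrix over R with A_{i,j} = 0 whenever i + j < k + 1 (lower anti-triangular), and B a k×k matrix over R with B_{i,j} = 0 whenever i + j ≥ k + 1 (strictly upper anti-triangular). Let D(x) = det(A·x + B) ∈ R[x], where x is an indeterminate. Then: (a) the coefficient of x^0 in D is 0; (b) the coefficient of x^1 in D equals (−1)^{(k−1)(k−2)/2} · A_{k,k} · ∏_{i=1}^{k−1} B_{i, k−i}; (c) the coefficient of x^k in D equals (−1)^{k(k−1)/2} · ∏_{i=1}^{k} A_{i, k+1−i}. -/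
/-!
If row `r` of `B` vanishes, then `X` divides row `r` of `A X + B`. Dividing it out leaves a matrix
of the same linear shape whose value at `0` is `B` with row `r` replaced by that of `A`, so the
coefficients of `1` and `X` in `det (A X + B)` are `0` and the determinant of that value. When `B`
is strictly upper anti-triangular and `r` is the last row, only the corner entry of the last column
of that value can be nonzero, and the complementary minor is anti-triangular. The top coefficient
is `det A`. Anti-triangular determinants become triangular ones on reversing the order of the
columns.
-/

open Polynomial

theorem sign_finRevPerm (n : ℕ) :
    Equiv.Perm.sign (Fin.revPerm : Equiv.Perm (Fin n)) = (-1) ^ (n * (n - 1) / 2) := by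
  rw [Equiv.Perm.sign_eq_prod_prod_Iio]
  calc ∏ j : Fin n, ∏ i ∈ Finset.Iio j, (if Fin.revPerm i < Fin.revPerm j then 1 else -1 : ℤˣ)
      = ∏ j : Fin n, ∏ _i ∈ Finset.Iio j, (-1 : ℤˣ) :=
        Finset.prod_congr rfl fun j _ => Finset.prod_congr rfl fun i hi =>
          if_neg (Fin.rev_lt_rev.not.2 (Finset.mem_Iio.1 hi).not_gt)
    _ = ∏ j : Fin n, (-1 : ℤˣ) ^ (j : ℕ) := by simp only [Finset.prod_const, Fin.card_Iio]
    _ = (-1) ^ (n * (n - 1) / 2) := by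
        rw [Fin.prod_univ_eq_prod_range (fun j => (-1 : ℤˣ) ^ j), Finset.prod_pow_eq_pow_sum,
          Finset.sum_range_id]

/-- A square matrix is lower anti-triangular if it vanishes strictly above its anti-diagonal
`j = i.rev`. -/
def IsLowerAntitriangular {R : Type*} [Zero R] {n : ℕ} (M : Matrix (Fin n) (Fin n) R) : Prop :=
  ∀ ⦃i j⦄, j < i.rev → M i j = 0

/-- A square matrix is upper anti-triangular if it vanishes strictly below its anti-diagonal
`j = i.rev`. -/
def IsUpperAntitriangular {R : Type*} [Zero R] {n : ℕ} (M : Matrix (Fin n) (Fin n) R) : Prop :=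
  ∀ ⦃i j⦄, i.rev < j → M i j = 0

/-- A square matrix is strictly upper anti-triangular if it vanishes on and below its
anti-diagonal `j = i.rev`. -/
def IsStrictlyUpperAntitriangular {R : Type*} [Zero R] {n : ℕ}
    (M : Matrix (Fin n) (Fin n) R) : Prop :=
  ∀ ⦃i j⦄, i.rev ≤ j → M i j = 0

namespace IsStrictlyUpperAntitriangular

variable {R : Type*} [Zero R] {n : ℕ} {B : Matrix (Fin (n + 1)) (Fin (n + 1)) R}

theorem row_last_eq_zero (hB : IsStrictlyUpperAntitriangular B) (j : Fin (n + 1)) :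
    B (Fin.last n) j = 0 :=
  hB (by simp)

theorem column_last_eq_zero (hB : IsStrictlyUpperAntitriangular B) (i : Fin (n + 1)) :
    B i (Fin.last n) = 0 :=
  hB (Fin.le_last _)

theorem isUpperAntitriangular_submatrix_castSucc (hB : IsStrictlyUpperAntitriangular B) :
    IsUpperAntitriangular (B.submatrix Fin.castSucc Fin.castSucc) := by
  intro i j hij
  refine hB ?_
  rw [Fin.rev_castSucc]
  exact Fin.succ_le_castSucc_iff.2 hij

end IsStrictlyUpperAntitriangular

section Determinant

variable {R : Type*} [CommRing R] {n : ℕ}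

theorem det_eq_sign_mul_det_submatrix_rev (M : Matrix (Fin n) (Fin n) R) :
    M.det = (-1) ^ (n * (n - 1) / 2) * (M.submatrix id Fin.rev).det := by
  have hrev : (M.submatrix id Fin.rev).submatrix id Fin.revPerm = M := by
    ext i j
    simp
  have hperm := Matrix.det_permute' Fin.revPerm (M.submatrix id Fin.rev)
  simpa [hrev, sign_finRevPerm] using hperm

theorem IsLowerAntitriangular.det_eq {M : Matrix (Fin n) (Fin n) R}
    (hM : IsLowerAntitriangular M) :
    M.det = (-1) ^ (n * (n - 1) / 2) * ∏ i, M i i.rev := by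
  have htri : (M.submatrix id Fin.rev).IsLowerTriangular :=
    fun _ _ hij => hM (Fin.rev_lt_rev.2 hij)
  rw [det_eq_sign_mul_det_submatrix_rev, Matrix.det_of_isLowerTriangular _ htri]
  rfl

theorem IsUpperAntitriangular.det_eq {M : Matrix (Fin n) (Fin n) R}
    (hM : IsUpperAntitriangular M) :
    M.det = (-1) ^ (n * (n - 1) / 2) * ∏ i, M i i.rev := by
  have htri : (M.submatrix id Fin.rev).IsUpperTriangular :=
    fun _ _ hij => hM (Fin.rev_lt_rev.2 hij)
  rw [det_eq_sign_mul_det_submatrix_rev, Matrix.det_of_isUpperTriangular htri]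
  rfl

theorem det_of_column_eq_zero_of_ne (M : Matrix (Fin (n + 1)) (Fin (n + 1)) R)
    (p q : Fin (n + 1)) (h : ∀ i ≠ p, M i q = 0) :
    M.det = (-1) ^ (p + q : ℕ) * M p q * (M.submatrix p.succAbove q.succAbove).det := by
  rw [Matrix.det_succ_column M q]
  exact Fintype.sum_eq_single p fun i hi => by rw [h i hi, mul_zero, zero_mul]

theorem IsStrictlyUpperAntitriangular.det_updateRow_last
    {B : Matrix (Fin (n + 1)) (Fin (n + 1)) R} (hB : IsStrictlyUpperAntitriangular B)
    (v : Fin (n + 1) → R) :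
    (B.updateRow (Fin.last n) v).det =
      (-1) ^ (n * (n - 1) / 2) * v (Fin.last n) * ∏ i : Fin n, B i.castSucc i.rev.castSucc := by
  have hcol : ∀ i ≠ Fin.last n, B.updateRow (Fin.last n) v i (Fin.last n) = 0 := fun i hi => by
    rw [Matrix.updateRow_ne hi, hB.column_last_eq_zero]
  have hminor : (B.updateRow (Fin.last n) v).submatrix Fin.castSucc Fin.castSucc =
      B.submatrix Fin.castSucc Fin.castSucc := by
    ext i j
    simp [(Fin.castSucc_lt_last i).ne]
  rw [det_of_column_eq_zero_of_ne _ _ _ hcol, Fin.succAbove_last, hminor,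
    hB.isUpperAntitriangular_submatrix_castSucc.det_eq, Matrix.updateRow_self,
    Even.neg_one_pow ⟨_, rfl⟩]
  simp only [Matrix.submatrix_apply]
  ring

end Determinant

section LinearMatrixPolynomial

theorem of_C_mul_X_add_C {R m n : Type*} [CommSemiring R] (A B : Matrix m n R) :
    (Matrix.of fun i j => C (A i j) * X + C (B i j)) = (X : R[X]) • A.map C + B.map C := by
  ext1 i j
  simp [X_mul_C]

variable {R ι : Type*} [CommRing R] [Fintype ι] [DecidableEq ι]

theorem det_X_smul_add_C_eq_X_mul_of_row_eq_zero (A B : Matrix ι ι R) (r : ι)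
    (hr : ∀ j, B r j = 0) :
    ((X : R[X]) • A.map C + B.map C).det =
      X * ((X : R[X]) • (A.updateRow r 0).map C + (B.updateRow r (A r)).map C).det := by
  set N := (X : R[X]) • (A.updateRow r 0).map C + (B.updateRow r (A r)).map C with hN
  have hrow : (X : R[X]) • A.map C + B.map C = N.updateRow r ((X : R[X]) • N r) := by
    ext1 i j
    obtain rfl | hi := eq_or_ne i r
    · simp [hN, hr]
    · simp [hN, hi]
  rw [hrow, Matrix.det_updateRow_smul, Matrix.updateRow_eq_self]

theorem coeff_one_det_X_smul_add_C_of_row_eq_zero (A B : Matrix ι ι R) (r : ι)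
    (hr : ∀ j, B r j = 0) :
    ((X : R[X]) • A.map C + B.map C).det.coeff 1 = (B.updateRow r (A r)).det := by
  rw [det_X_smul_add_C_eq_X_mul_of_row_eq_zero A B r hr, coeff_X_mul, coeff_det_X_add_C_zero]

end LinearMatrixPolynomial

/-- Let `A` be lower anti-triangular (`A i j = 0` when `i + j < k + 1`, `1`-indexed) and `B`
strictly upper anti-triangular (`B i j = 0` when `i + j ≥ k + 1`, `1`-indexed), and let
`D(x) = det (A·x + B) ∈ R[x]`. Then the coefficient of `x^0` in `D` is `0`, the coefficient of
`x^1` is `(-1)^((k-1)(k-2)/2) · A k k · ∏_{i=1}^{k-1} B i (k-i)`, and the coefficient of `x^k`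
is `(-1)^(k(k-1)/2) · ∏_{i=1}^{k} A i (k+1-i)`. (Indices are `0`-indexed via `Fin k` below.) -/
theorem stmt_3 {R : Type*} [CommRing R] (k : ℕ) (hk : 2 ≤ k)
    (A B : Matrix (Fin k) (Fin k) R)
    (hA : ∀ i j : Fin k, (i : ℕ) + (j : ℕ) < k - 1 → A i j = 0)
    (hB : ∀ i j : Fin k, k - 1 ≤ (i : ℕ) + (j : ℕ) → B i j = 0)
    (D : Polynomial R)
    (hD : D = Matrix.det (Matrix.of fun i j : Fin k =>
      Polynomial.C (A i j) * Polynomial.X + Polynomial.C (B i j))) :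
    D.coeff 0 = 0 ∧
    D.coeff 1 = (-1 : R) ^ ((k - 1) * (k - 2) / 2) *
        A ⟨k - 1, by omega⟩ ⟨k - 1, by omega⟩ *
        ∏ i : Fin (k - 1), B ⟨(i : ℕ), by have := i.isLt; omega⟩ ⟨k - 2 - (i : ℕ), by omega⟩ ∧
    D.coeff k = (-1 : R) ^ (k * (k - 1) / 2) * ∏ i : Fin k, A i i.rev := by
  obtain ⟨n, rfl⟩ : ∃ n, k = n + 1 := ⟨k - 1, by omega⟩
  have hA' : IsLowerAntitriangular A := fun i j hij => hA i j (by
    rw [Fin.lt_def, Fin.val_rev] at hij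
    omega)
  have hB' : IsStrictlyUpperAntitriangular B := fun i j hij => hB i j (by
    rw [Fin.le_def, Fin.val_rev] at hij
    omega)
  rw [hD, of_C_mul_X_add_C]
  refine ⟨?_, ?_, ?_⟩
  · rw [coeff_det_X_add_C_zero]
    exact Matrix.det_eq_zero_of_row_eq_zero _ hB'.row_last_eq_zero
  · rw [coeff_one_det_X_smul_add_C_of_row_eq_zero A B _ hB'.row_last_eq_zero,
      hB'.det_updateRow_last]
    have hindex : ∀ i : Fin n, (i.rev.castSucc : ℕ) = n + 1 - 2 - i := fun i => by
      rw [Fin.val_castSucc, Fin.val_rev]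
      omega
    exact congrArg _ (Finset.prod_congr rfl fun i _ => congrArg (B _) (Fin.ext (hindex i)))
  · have hcard := coeff_det_X_add_C_card A B
    rw [Fintype.card_fin] at hcard
    rw [hcard, hA'.det_eq]
end

section
/- Let F be an algebraically closed field. Fix an integer k ≥ 1, an integer m ≥ 0, and nondecreasing integer tuples e_1 ≤ … ≤ e_k and f_1 ≤ … ≤ f_k satisfying f_i ≥ e_i for all 1 ≤ i ≤ k and f_i ≥ e_{i+1} − m for all 1 ≤ i ≤ k−1. Set δ = Σ_{i=1}^k (f_i − e_i). Let V be the F-vector space of pairs (A,B) of k×k matrices with entries in F[t] satisfying deg A_{i,j} ≤ f_i − e_{k+1−j} and deg B_{i,j} ≤ f_i − e_{k+1−j} + m for all i,j (with deg 0 = −∞, so an entry must be 0 when its bound is negative), and let W be the F-vector space of tuples (P_0, P_1, …, P_k) of polynomials in F[t] with deg P_j ≤ δ + (k−j)·m for each 0 ≤ j ≤ k. Let φ : V → W be the map sending (A,B) to the tuple of coefficients of det(A·x + B·y), i.e., det(A·x + B·y) = Σ_{j=0}^{k} φ(A,B)_j · x^j y^{k−j} in F[t][x,y]. Then φ is dominant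 in the following sense: any polynomial function ψ on W (i.e., any polynomial in the finitely many F-coordinates of W) that satisfies ψ(φ(A,B)) = 0 for all (A,B) ∈ V is the zero polynomial. -/
/-!
The image of a polynomial map over an infinite field is Zariski dense as soon as the differential
is surjective at one point: restrict a polynomial vanishing on the image to curves through the
image of that point, and look at its lowest homogeneous component there.

For the determinant, a suitable point is an upper bidiagonal matrix with generic linear forms `ℓ r`
on the diagonal and generic constants `-s r` above it. In the direction of a lower triangular
matrix `u` the differential is `∑ cofactor i j * u i j`. To write a given form `P` in this way,
treat the last row first: modulo the last diagonal form `ℓ q`, that is, at its zero `(-b, a)`, only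
the cofactors of that row survive, and repeated use of Bézout's identity with degree control
produces the right entries. What is left of `P` is divisible by `ℓ q`, and the quotient is handled
by the first `q` rows.
-/

open Polynomial
open Finset.HasAntidiagonal (antidiagonal mem_antidiagonal)

/-- The polynomials of degree at most the integer `z`, where `deg 0 = -∞`: for negative `z` only
the zero polynomial qualifies. -/
def intDegreeLE (R : Type*) [Semiring R] (z : ℤ) : Submodule R R[X] where
  carrier := {p | ∀ n : ℕ, z < n → p.coeff n = 0}
  zero_mem' n _ := coeff_zero n
  add_mem' hp hq n hn := by rw [coeff_add, hp n hn, hq n hn, add_zero]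
  smul_mem' c p hp n hn := by rw [coeff_smul, hp n hn, smul_zero]

namespace intDegreeLE

section Semiring

variable {R : Type*} [Semiring R] {p q : R[X]} {y z : ℤ}

theorem mono (hyz : y ≤ z) : intDegreeLE R y ≤ intDegreeLE R z :=
  fun _ hp n hn => hp n (hyz.trans_lt hn)

theorem mem_of_natDegree_le (h : (p.natDegree : ℤ) ≤ z) : p ∈ intDegreeLE R z :=
  fun _ hn => coeff_eq_zero_of_natDegree_lt (by omega)

instance : SetLike.GradedMonoid (intDegreeLE R) where
  one_mem := mem_of_natDegree_le (by simp)
  mul_mem y z p q hp hq n hn := by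
    rw [coeff_mul]
    refine Finset.sum_eq_zero fun x hx => ?_
    have hx' : x.1 + x.2 = n := mem_antidiagonal.1 hx
    by_cases h : y < x.1
    · rw [hp _ h, zero_mul]
    · rw [hq x.2 (by omega), mul_zero]

theorem mem_of_monic_mul_mem (hp : p.Monic) (h : p * q ∈ intDegreeLE R z) :
    q ∈ intDegreeLE R (z - p.natDegree) := by
  rcases eq_or_ne q 0 with rfl | hq
  · exact zero_mem _
  refine mem_of_natDegree_le ?_
  by_contra! hlt
  have hc := h (p.natDegree + q.natDegree) (by push_cast; omega)
  rw [coeff_mul_degree_add_degree, hp.leadingCoeff, one_mul] at hc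
  exact hq (leadingCoeff_eq_zero.1 hc)

end Semiring

theorem mem_modByMonic {R : Type*} [CommRing R] {p : R[X]} {z : ℤ} (hp : p.Monic)
    (hz : (p.natDegree : ℤ) - 1 ≤ z) (q : R[X]) : q %ₘ p ∈ intDegreeLE R z := by
  nontriviality R
  intro n hn
  refine coeff_eq_zero_of_degree_lt ((degree_modByMonic_lt q hp).trans_le ?_)
  rw [degree_eq_natDegree hp.ne_zero]
  exact_mod_cast (by omega : p.natDegree ≤ n)

theorem exists_mul_add_mul_eq_of_isCoprime {R : Type*} [CommRing R] {p q h : R[X]} {x y z : ℤ}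
    (hp : p.Monic) (hpq : IsCoprime p q) (hq : q ∈ intDegreeLE R y) (hh : h ∈ intDegreeLE R x)
    (hx : y + z ≤ x) (hz : (p.natDegree : ℤ) - 1 ≤ z) :
    ∃ u ∈ intDegreeLE R (x - p.natDegree), ∃ v ∈ intDegreeLE R z, p * u + q * v = h := by
  obtain ⟨α, β, hαβ⟩ := hpq
  obtain ⟨w, hw⟩ := dvd_modByMonic_sub (h * β) p
  have hv := mem_modByMonic hp hz (h * β)
  have hu : p * (h * α - q * w) + q * ((h * β) %ₘ p) = h := by
    linear_combination h * hαβ + q * hw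
  refine ⟨h * α - q * w, mem_of_monic_mul_mem hp ?_, _, hv, hu⟩
  rw [eq_sub_of_add_eq hu]
  exact sub_mem hh (mono hx (SetLike.mul_mem_graded hq hv))

end intDegreeLE

/-- The forms `∑ P_j x ^ j y ^ (i.1 - j)` of degree `i.1` over `R[t]` with
`deg P_j ≤ i.2 + (i.1 - j) * m`, dehomogenized at `y = 1`. They are graded by `i`, and an entry of
`A * x + B * y` in which `A` has degree at most `d` and `B` degree at most `d + m` lies in degree
`(1, d)`. -/
def twistedForm (R : Type*) [Semiring R] (m : ℕ) (i : ℕ × ℤ) : Submodule R R[X][X] where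
  carrier := {P | P.natDegree ≤ i.1 ∧ ∀ j : ℕ, P.coeff j ∈ intDegreeLE R (i.2 + (i.1 - j) * m)}
  zero_mem' := ⟨by simp, fun j => by simp⟩
  add_mem' hP hQ := ⟨natDegree_add_le_of_degree_le hP.1 hQ.1, fun j => by
    rw [coeff_add]; exact add_mem (hP.2 j) (hQ.2 j)⟩
  smul_mem' c P hP := ⟨(natDegree_smul_le c P).trans hP.1, fun j => by
    rw [coeff_smul]; exact Submodule.smul_mem _ c (hP.2 j)⟩

namespace twistedForm

variable {R : Type*} {m k : ℕ} {d : ℤ}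

section Semiring

variable [Semiring R] {P : R[X][X]} {p q : R[X]}

theorem natDegree_le (hP : P ∈ twistedForm R m (k, d)) : P.natDegree ≤ k := hP.1

theorem coeff_mem (hP : P ∈ twistedForm R m (k, d)) (j : ℕ) :
    P.coeff j ∈ intDegreeLE R (d + (k - j) * m) := hP.2 j

theorem C_mem_zero (hp : p ∈ intDegreeLE R d) : C p ∈ twistedForm R m (0, d) := by
  refine ⟨by simp, fun j => ?_⟩
  rcases j with _ | j
  · simpa using hp
  · simp

instance : SetLike.GradedMonoid (twistedForm R m) where
  one_mem := C_mem_zero (SetLike.one_mem_graded _)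
  mul_mem i i' P Q hP hQ := by
    refine ⟨natDegree_mul_le_of_le hP.1 hQ.1, fun j => ?_⟩
    rw [coeff_mul]
    refine sum_mem fun x hx => ?_
    rw [← mem_antidiagonal.1 hx]
    refine intDegreeLE.mono (le_of_eq ?_) (SetLike.mul_mem_graded (hP.2 x.1) (hQ.2 x.2))
    simp only [Prod.fst_add, Prod.snd_add]
    push_cast
    ring

theorem C_add_C_mul_X_mem (hq : q ∈ intDegreeLE R (d + m)) (hp : p ∈ intDegreeLE R d) :
    C q + C p * X ∈ twistedForm R m (1, d) := by
  refine ⟨by compute_degree, fun j => ?_⟩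
  rcases j with _ | _ | j
  · simpa using hq
  · simpa using hp
  · simp

theorem C_mem (hq : q ∈ intDegreeLE R (d + m)) : C q ∈ twistedForm R m (1, d) := by
  simpa using C_add_C_mul_X_mem hq (zero_mem _)

theorem C_coeff_zero_add_C_coeff_one_mul_X (hP : P ∈ twistedForm R m (1, d)) :
    C (P.coeff 0) + C (P.coeff 1) * X = P := by
  rw [add_comm, ← eq_X_add_C_of_natDegree_le_one (natDegree_le hP)]

theorem monomial_mem {j n : ℕ} (hj : j ≤ k) (hn : (n : ℤ) ≤ d + (k - j : ℕ) * m) (x : R) :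
    monomial j (monomial n x) ∈ twistedForm R m (k, d) := by
  refine ⟨(natDegree_monomial_le _).trans hj, fun i => ?_⟩
  rw [coeff_monomial]
  split_ifs with h
  · subst h
    refine intDegreeLE.mem_of_natDegree_le ?_
    rw [Nat.cast_sub hj] at hn
    exact le_trans (by exact_mod_cast natDegree_monomial_le x) hn
  · exact zero_mem _

end Semiring

theorem mem_of_C_add_C_mul_X_mul_mem [CommRing R] {a b : R[X]} {P : R[X][X]} (ha : a.Monic)
    (hb : b ∈ intDegreeLE R (a.natDegree + m))
    (h : (C b + C a * X) * P ∈ twistedForm R m (k + 1, d)) :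
    P ∈ twistedForm R m (k, d - a.natDegree) := by
  have hcoeff (j : ℕ) :
      a * P.coeff j = ((C b + C a * X) * P).coeff (j + 1) - b * P.coeff (j + 1) := by
    rw [add_mul, mul_assoc, coeff_add, coeff_C_mul, coeff_C_mul, coeff_X_mul]
    ring
  constructor
  · by_contra! hlt
    have hlead := hcoeff P.natDegree
    rw [coeff_eq_zero_of_natDegree_lt (Nat.lt_of_le_of_lt (natDegree_le h) (by gcongr)),
      coeff_natDegree_succ_eq_zero, mul_zero, sub_zero, ha.mul_right_eq_zero_iff,
      coeff_natDegree, leadingCoeff_eq_zero] at hlead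
    simp [hlead] at hlt
  · intro j
    rcases lt_or_ge P.natDegree j with hj | hj
    · simp [coeff_eq_zero_of_natDegree_lt hj]
    replace hj := hj.trans (Nat.le_succ _)
    induction hj using Nat.decreasingInduction with
    | self => simp [coeff_natDegree_succ_eq_zero]
    | of_succ j _ ih =>
      have hmem : a * P.coeff j ∈ intDegreeLE R (d + (k - j) * m) := by
        rw [hcoeff]
        refine sub_mem (intDegreeLE.mono (le_of_eq ?_) (coeff_mem h (j + 1)))
          (intDegreeLE.mono (le_of_eq ?_) (SetLike.mul_mem_graded hb ih)) <;>
        · push_cast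
          ring
      exact intDegreeLE.mono (le_of_eq (by ring)) (intDegreeLE.mem_of_monic_mul_mem ha hmem)

end twistedForm

/-- The value of `P`, read as a form of degree `k` in `x` and `y` dehomogenized at `y = 1`, at the
zero `(-b, a)` of the linear form `a * x + b * y`. -/
noncomputable def evalAtZero {A : Type*} [CommRing A] (a b : A) (k : ℕ) : A[X] →ₗ[A] A :=
  (MvPolynomial.aeval ![-b, a]).toLinearMap ∘ₗ homogenizeLM k

namespace evalAtZero

section CommRing

variable {A : Type*} [CommRing A] (a b : A)

theorem apply_eq_sum (k : ℕ) (P : A[X]) :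
    evalAtZero a b k P =
      ∑ ij ∈ antidiagonal k, P.coeff ij.1 * ((-b) ^ ij.1 * a ^ ij.2) := by
  simp [evalAtZero, homogenizeLM, homogenize, MvPolynomial.eval_monomial,
    Finsupp.prod_fintype]

theorem map_mul {k l : ℕ} {P Q : A[X]} (hP : P.natDegree ≤ k) (hQ : Q.natDegree ≤ l) :
    evalAtZero a b (k + l) (P * Q) = evalAtZero a b k P * evalAtZero a b l Q := by
  simp [evalAtZero, homogenizeLM, homogenize_mul P Q hP hQ]

@[simp]
theorem map_C (q : A) (k : ℕ) : evalAtZero a b k (C q) = q * a ^ k := by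
  simp [evalAtZero, homogenizeLM]

@[simp]
theorem map_linear (p q : A) : evalAtZero a b 1 (C q + C p * X) = q * a - p * b := by
  simp [evalAtZero, homogenizeLM, sub_eq_add_neg]

theorem dvd_C_pow_mul_sub {k : ℕ} {P : A[X]} (hP : P.natDegree ≤ k) :
    C b + C a * X ∣ C a ^ k * P - C (evalAtZero a b k P) := by
  have hsum : C a ^ k * P =
      ∑ ij ∈ antidiagonal k, C (P.coeff ij.1) * ((C a * X) ^ ij.1 * C a ^ ij.2) := by
    conv_lhs => rw [P.as_sum_range_C_mul_X_pow' (Nat.lt_succ_iff.2 hP),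
      ← Finset.Nat.sum_antidiagonal_eq_sum_range_succ_mk (fun ij => C (P.coeff ij.1) * X ^ ij.1),
      Finset.mul_sum]
    refine Finset.sum_congr rfl fun ij hij => ?_
    rw [← mem_antidiagonal.1 hij]
    ring
  rw [hsum, apply_eq_sum, map_sum, ← Finset.sum_sub_distrib]
  refine Finset.dvd_sum fun ij _ => ?_
  have hdvd := sub_dvd_pow_sub_pow (C a * X) (C (-b)) ij.1
  rw [C_neg, sub_neg_eq_add, add_comm] at hdvd
  simp only [C_mul, C_pow, C_neg, ← mul_sub, ← sub_mul]
  exact (hdvd.mul_right _).mul_left _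

theorem dvd_of_eq_zero {a b : A} (hab : IsCoprime a b) {k : ℕ} {P : A[X]}
    (hP : P.natDegree ≤ k) (h : evalAtZero a b k P = 0) : C b + C a * X ∣ P := by
  have hcop : IsCoprime (C b + C a * X) (C a) :=
    (hab.symm.map C).add_mul_left_left X
  have hdvd := dvd_C_pow_mul_sub a b hP
  rw [h, C_0, sub_zero] at hdvd
  exact hcop.pow_right.dvd_of_dvd_mul_left hdvd

end CommRing

theorem mem_intDegreeLE {R : Type*} [CommRing R] {m k : ℕ} {d D : ℤ} {a b : R[X]} {P : R[X][X]}
    (ha : a ∈ intDegreeLE R d) (hb : b ∈ intDegreeLE R (d + m)) (hP : P ∈ twistedForm R m (k, D)) :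
    evalAtZero a b k P ∈ intDegreeLE R (D + k * (d + m)) := by
  rw [apply_eq_sum]
  refine sum_mem fun ij hij => ?_
  refine intDegreeLE.mono (le_of_eq ?_) (SetLike.mul_mem_graded (twistedForm.coeff_mem hP ij.1)
    (SetLike.mul_mem_graded (SetLike.pow_mem_graded _ (neg_mem hb)) (SetLike.pow_mem_graded _ ha)))
  rw [← mem_antidiagonal.1 hij]
  simp only [nsmul_eq_mul]
  push_cast
  ring

end evalAtZero

theorem twistedForm.prod_mem {R ι : Type*} [CommSemiring R] {m : ℕ} {s : Finset ι} {d : ι → ℤ}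
    {P : ι → R[X][X]} (h : ∀ i ∈ s, P i ∈ twistedForm R m (1, d i)) :
    ∏ i ∈ s, P i ∈ twistedForm R m (s.card, ∑ i ∈ s, d i) := by
  convert SetLike.prod_mem_graded (twistedForm R m) (fun i => (1, d i)) P h
  · simp [Prod.fst_sum]
  · simp [Prod.snd_sum]

theorem evalAtZero.map_prod {A ι : Type*} [CommRing A] (a b : A) {s : Finset ι} {P : ι → A[X]}
    (h : ∀ i ∈ s, (P i).natDegree ≤ 1) :
    evalAtZero a b s.card (∏ i ∈ s, P i) = ∏ i ∈ s, evalAtZero a b 1 (P i) := by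
  have := homogenize_finsetProd h
  rw [← Finset.card_eq_sum_ones] at this
  simp [evalAtZero, homogenizeLM, this]

/-- The weight of the path from `0` to `i` that has weight `l r` in the step `r < j` and weight
`s r` in the step `j ≤ r < i`. These products are the building blocks of the cofactors of a
bidiagonal matrix. -/
def pathWeight {M : Type*} [CommMonoid M] (l s : ℕ → M) (j i : ℕ) : M :=
  (∏ r ∈ Finset.range j, l r) * ∏ r ∈ Finset.Ico j i, s r

namespace pathWeight

section CommMonoid

variable {M : Type*} [CommMonoid M] (l s : ℕ → M)

theorem self (i : ℕ) : pathWeight l s i i = ∏ r ∈ Finset.range i, l r := by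
  simp [pathWeight]

theorem succ_right {j i : ℕ} (h : j ≤ i) :
    pathWeight l s j (i + 1) = pathWeight l s j i * s i := by
  rw [pathWeight, pathWeight, Finset.prod_Ico_succ_top h, mul_assoc]

theorem succ_left_mul {j i : ℕ} (h : j < i) :
    pathWeight l s (j + 1) i * s j = pathWeight l s j i * l j := by
  rw [pathWeight, pathWeight, Finset.prod_range_succ, Finset.prod_eq_prod_Ico_succ_bot h]
  ac_rfl

end CommMonoid

theorem mem_twistedForm {R : Type*} [CommSemiring R] {m : ℕ} {e f : ℕ → ℤ} {l s : ℕ → R[X][X]}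
    (hl : ∀ r, l r ∈ twistedForm R m (1, f r - e r))
    (hs : ∀ r, s r ∈ twistedForm R m (1, f r - e (r + 1))) {j i : ℕ} (hji : j ≤ i) :
    pathWeight l s j i ∈
      twistedForm R m (i, ∑ r ∈ Finset.range i, (f r - e r) + (e j - e i)) := by
  induction i, hji using Nat.le_induction with
  | base => simpa [self] using twistedForm.prod_mem fun r (_ : r ∈ Finset.range j) => hl r
  | succ i hi ih =>
    rw [succ_right l s hi]
    convert SetLike.mul_mem_graded ih (hs i) using 2
    ext
    · rfl
    · rw [Finset.sum_range_succ, Prod.snd_add]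
      ring

theorem natDegree_le {R : Type*} [CommSemiring R] {l s : ℕ → R[X]}
    (hl : ∀ r, (l r).natDegree ≤ 1) (hs : ∀ r, (s r).natDegree ≤ 1) {j i : ℕ} (hji : j ≤ i) :
    (pathWeight l s j i).natDegree ≤ i := by
  induction i, hji using Nat.le_induction with
  | base =>
    rw [self]
    exact (natDegree_prod_le _ _).trans
      (by simpa using Finset.sum_le_card_nsmul (Finset.range j) _ 1 fun r _ => hl r)
  | succ i hi ih =>
    rw [succ_right l s hi]
    exact natDegree_mul_le_of_le ih (hs i)

theorem map_evalAtZero {A : Type*} [CommRing A] (a b : A) {l s : ℕ → A[X]}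
    (hl : ∀ r, (l r).natDegree ≤ 1) (hs : ∀ r, (s r).natDegree ≤ 1) {j i : ℕ} (hji : j ≤ i) :
    evalAtZero a b i (pathWeight l s j i) =
      pathWeight (fun r => evalAtZero a b 1 (l r)) (fun r => evalAtZero a b 1 (s r)) j i := by
  induction i, hji using Nat.le_induction with
  | base => simpa [self] using evalAtZero.map_prod a b fun r (_ : r ∈ Finset.range j) => hl r
  | succ i hi ih =>
    rw [succ_right _ _ hi, succ_right _ _ hi, evalAtZero.map_mul a b (natDegree_le hl hs hi) (hs i),
      ih]

theorem exists_sum_mul_eq {R : Type*} [CommRing R] {c l : ℕ → R[X]} {μ g : ℕ → ℤ} {n : ℕ}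
    (hc : ∀ j < n, (c j).Monic) (hl : ∀ r < n, l r ∈ intDegreeLE R (μ r))
    (hcop : ∀ j < n, ∀ r ≤ j, IsCoprime (l r) (c j))
    (hg : ∀ j < n, ((c j).natDegree : ℤ) - 1 ≤ g (j + 1))
    (hbal : ∀ j < n, g j + (c j).natDegree = μ j + g (j + 1)) {h : R[X]}
    (hh : h ∈ intDegreeLE R (∑ r ∈ Finset.range n, μ r + g n)) :
    ∃ v : ℕ → R[X], (∀ i ≤ n, v i ∈ intDegreeLE R (g i)) ∧
      ∑ i ∈ Finset.range (n + 1), pathWeight l c i n * v i = h := by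
  induction n generalizing h with
  | zero => exact ⟨fun _ => h, fun i hi => by simpa [Nat.le_zero.1 hi] using hh, by simp [self]⟩
  | succ n ih =>
    have hprod : IsCoprime (c n) (∏ r ∈ Finset.range (n + 1), l r) :=
      .prod_right fun r hr => (hcop n n.lt_succ_self r (Finset.mem_range_succ_iff.1 hr)).symm
    obtain ⟨u, hu, w, hw, rfl⟩ := intDegreeLE.exists_mul_add_mul_eq_of_isCoprime
      (hc n n.lt_succ_self) hprod
      (SetLike.prod_mem_graded _ _ _ fun r hr => hl r (Finset.mem_range.1 hr)) hh le_rfl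
      (hg n n.lt_succ_self)
    have hun : u ∈ intDegreeLE R (∑ r ∈ Finset.range n, μ r + g n) :=
      intDegreeLE.mono (by rw [Finset.sum_range_succ]; linarith [hbal n n.lt_succ_self]) hu
    obtain ⟨v, hv, rfl⟩ := ih (fun j hj => hc j (by omega)) (fun j hj => hl j (by omega))
      (fun j hj => hcop j (by omega)) (fun j hj => hg j (by omega))
      (fun j hj => hbal j (by omega)) hun
    refine ⟨Function.update v (n + 1) w, fun i hi => ?_, ?_⟩
    · rcases hi.eq_or_lt with rfl | hi
      · rwa [Function.update_self]
      · rw [Function.update_of_ne hi.ne]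
        exact hv i (Nat.lt_succ_iff.1 hi)
    · rw [Finset.sum_range_succ, Function.update_self, self, add_left_inj, Finset.mul_sum]
      refine Finset.sum_congr rfl fun i hi => ?_
      have hin := Finset.mem_range_succ_iff.1 hi
      rw [Function.update_of_ne (by omega), succ_right l c hin]
      ring

end pathWeight

/-- The genericity needed of the bidiagonal matrix of linear forms with diagonal entries
`a r * x + b r * y` and superdiagonal entries `-s r * y`: the `a r` and `s r` have the full
degrees allowed by `e`, `f` and `m`, the linear forms on the diagonal are primitive, and the
resultant of the `r`-th and the `q`-th of them is coprime to `a q` and to the `s j` with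
`r ≤ j < q`. -/
structure GenericBidiagonal {R : Type*} [CommRing R] (m : ℕ) (e f : ℕ → ℤ) (a b s : ℕ → R[X]) :
    Prop where
  monic_a (r : ℕ) : (a r).Monic
  natDegree_a (r : ℕ) : ((a r).natDegree : ℤ) = f r - e r
  b_mem (r : ℕ) : b r ∈ intDegreeLE R (f r - e r + m)
  monic_s (j : ℕ) : (s j).Monic
  natDegree_s (j : ℕ) : ((s j).natDegree : ℤ) = f j - e (j + 1) + m
  isCoprime (r : ℕ) : IsCoprime (a r) (b r)
  isCoprime_cross {r j q : ℕ} (hrj : r ≤ j) (hjq : j < q) :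
    IsCoprime (b r * a q - a r * b q) (s j * a q)

theorem exists_genericBidiagonal {F : Type*} [Field F] [Infinite F] {m : ℕ} {e f : ℕ → ℤ}
    (hef : ∀ r, e r ≤ f r) (hefm : ∀ r, e (r + 1) - m ≤ f r) :
    ∃ a b s : ℕ → F[X], GenericBidiagonal m e f a b s := by
  have hinf : ({0}ᶜ : Set F).Infinite := (Set.finite_singleton 0).infinite_compl
  let α (r : ℕ) : F := hinf.natEmbedding _ r
  have hα (r : ℕ) : α r ≠ 0 := (hinf.natEmbedding _ r).2
  have hαinj : Function.Injective α :=
    Subtype.val_injective.comp (hinf.natEmbedding _).injective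
  let a (r : ℕ) : F[X] := (X - C (α r)) ^ (f r - e r).toNat
  have ha0 (r : ℕ) : (a r).coeff 0 ≠ 0 := by
    simp [a, coeff_zero_eq_eval_zero, hα r]
  let b (r : ℕ) : F[X] := C (α r * (a r).coeff 0)
  have hb (r : ℕ) : IsUnit (b r) := isUnit_C.2 (mul_ne_zero (hα r) (ha0 r)).isUnit
  refine ⟨a, b, fun j => X ^ (f j - e (j + 1) + m).toNat, fun r => (monic_X_sub_C _).pow _,
    fun r => ?_, fun r => intDegreeLE.mem_of_natDegree_le ?_, fun j => monic_X_pow _, fun j => ?_,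
    fun r => (isCoprime_one_left.of_isCoprime_of_dvd_left (hb r).dvd).symm,
    fun {r j q} hrj hjq => .mul_right ?_ ?_⟩
  · rw [natDegree_pow, natDegree_X_sub_C, mul_one, Int.toNat_of_nonneg (sub_nonneg.2 (hef r))]
  · rw [natDegree_C]
    have := hef r
    omega
  · rw [natDegree_X_pow, Int.toNat_of_nonneg (by linarith [hefm j])]
  · refine (IsCoprime.symm ?_).pow_right
    rw [irreducible_X.coprime_iff_not_dvd, X_dvd_iff]
    have hcross : (b r * a q - a r * b q).coeff 0 =
        (α r - α q) * ((a r).coeff 0 * (a q).coeff 0) := by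
      simp only [b, coeff_sub, mul_coeff_zero, coeff_C_zero]
      ring
    rw [hcross]
    exact mul_ne_zero (sub_ne_zero.2 (hαinj.ne (hrj.trans_lt hjq).ne))
      (mul_ne_zero (ha0 r) (ha0 q))
  · have haq : IsCoprime (a r) (a q) :=
      (pairwise_coprime_X_sub_C hαinj (hrj.trans_lt hjq).ne).pow
    have hbq : IsCoprime (b q) (a q) := isCoprime_one_left.of_isCoprime_of_dvd_left (hb q).dvd
    simpa [sub_eq_neg_add] using (haq.mul_left hbq).neg_left.add_mul_right_left (b r)

theorem evalAtZero.exists_linear_eq {R : Type*} [CommRing R] {m : ℕ} {z : ℤ} {a b v : R[X]}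
    (ha : a.Monic) (hb : b ∈ intDegreeLE R (a.natDegree + m)) (hab : IsCoprime a b)
    (hz : (a.natDegree : ℤ) - 1 ≤ z) (hv : v ∈ intDegreeLE R (z + m + a.natDegree)) :
    ∃ u ∈ twistedForm R m (1, z), evalAtZero a b 1 u = v := by
  obtain ⟨x, hx, y, hy, rfl⟩ :=
    intDegreeLE.exists_mul_add_mul_eq_of_isCoprime ha hab hb hv (by linarith) hz
  refine ⟨C x + C (-y) * X, twistedForm.C_add_C_mul_X_mem ?_ (neg_mem hy), ?_⟩
  · rwa [add_sub_cancel_right] at hx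
  · rw [map_linear]
    ring

/-- The cofactor of the entry `(i, j)`, `j ≤ i`, in the `n × n` upper bidiagonal matrix with
diagonal entries `l r` and superdiagonal entries `-s r`. -/
def bidiagonalCofactor {M : Type*} [CommMonoid M] (l s : ℕ → M) (n i j : ℕ) : M :=
  pathWeight l s j i * ∏ r ∈ Finset.Ico (i + 1) n, l r

theorem bidiagonalCofactor_succ {M : Type*} [CommMonoid M] (l s : ℕ → M) {n i : ℕ} (hi : i < n)
    (j : ℕ) : bidiagonalCofactor l s (n + 1) i j = l n * bidiagonalCofactor l s n i j := by
  rw [bidiagonalCofactor, bidiagonalCofactor, Finset.prod_Ico_succ_top hi]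
  ac_rfl

theorem bidiagonalCofactor_last {M : Type*} [CommMonoid M] (l s : ℕ → M) (n j : ℕ) :
    bidiagonalCofactor l s (n + 1) n j = pathWeight l s j n := by
  simp [bidiagonalCofactor]

/-- The linear forms `a r * x + b r * y`, dehomogenized at `y = 1`. -/
noncomputable def linearForms {A : Type*} [Semiring A] (a b : ℕ → A) (r : ℕ) : A[X] :=
  C (b r) + C (a r) * X

namespace GenericBidiagonal

variable {R : Type*} [CommRing R] {m : ℕ} {e f : ℕ → ℤ} {a b s : ℕ → R[X]}

theorem a_mem (H : GenericBidiagonal m e f a b s) (r : ℕ) : a r ∈ intDegreeLE R (f r - e r) :=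
  intDegreeLE.mem_of_natDegree_le (H.natDegree_a r).le

theorem linearForms_mem (H : GenericBidiagonal m e f a b s) (r : ℕ) :
    linearForms a b r ∈ twistedForm R m (1, f r - e r) :=
  twistedForm.C_add_C_mul_X_mem (H.b_mem r) (H.a_mem r)

theorem C_s_mem (H : GenericBidiagonal m e f a b s) (r : ℕ) :
    (C ∘ s) r ∈ twistedForm R m (1, f r - e (r + 1)) :=
  twistedForm.C_mem (intDegreeLE.mem_of_natDegree_le (H.natDegree_s r).le)

theorem sum_pathWeight_mul_mem (H : GenericBidiagonal m e f a b s) {q : ℕ} {u : ℕ → R[X][X]}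
    (hu : ∀ j ≤ q, u j ∈ twistedForm R m (1, f q - e j)) :
    ∑ j ∈ Finset.range (q + 1), pathWeight (linearForms a b) (C ∘ s) j q * u j ∈
      twistedForm R m (q + 1, ∑ r ∈ Finset.range (q + 1), (f r - e r)) := by
  refine sum_mem fun j hj => ?_
  have hjq := Finset.mem_range_succ_iff.1 hj
  convert SetLike.mul_mem_graded (pathWeight.mem_twistedForm H.linearForms_mem H.C_s_mem hjq)
    (hu j hjq) using 2
  ext
  · rfl
  · rw [Finset.sum_range_succ, Prod.snd_add]
    ring

theorem exists_evalAtZero_sum_eq (H : GenericBidiagonal m e f a b s) (he : Monotone e)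
    (hf : Monotone f) {q : ℕ} {h : R[X]}
    (hh : h ∈ intDegreeLE R
      (∑ r ∈ Finset.range (q + 1), (f r - e r) + (q + 1 : ℕ) * (f q - e q + m))) :
    ∃ u : ℕ → R[X][X], (∀ j ≤ q, u j ∈ twistedForm R m (1, f q - e j)) ∧
      evalAtZero (a q) (b q) (q + 1)
        (∑ j ∈ Finset.range (q + 1), pathWeight (linearForms a b) (C ∘ s) j q * u j) = h := by
  have hdeg (j : ℕ) : ((s j * a q).natDegree : ℤ) = f j - e (j + 1) + m + (f q - e q) := by
    rw [(H.monic_s j).natDegree_mul (H.monic_a q), Nat.cast_add, H.natDegree_s, H.natDegree_a]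
  obtain ⟨v, hv, rfl⟩ := pathWeight.exists_sum_mul_eq (n := q) (c := fun j => s j * a q)
    (l := fun r => b r * a q - a r * b q) (μ := fun r => f r - e r + (f q - e q + m))
    (g := fun j => f q - e j + m + (f q - e q))
    (fun j _ => (H.monic_s j).mul (H.monic_a q))
    (fun r _ => sub_mem
      (intDegreeLE.mono (by linarith) (SetLike.mul_mem_graded (H.b_mem r) (H.a_mem q)))
      (SetLike.mul_mem_graded (H.a_mem r) (H.b_mem q)))
    (fun j hj r hr => H.isCoprime_cross hr hj)
    (fun j hj => by rw [hdeg]; linarith [hf hj.le])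
    (fun j _ => by rw [hdeg]; ring)
    (intDegreeLE.mono (le_of_eq (by
      rw [Finset.sum_range_succ, Finset.sum_add_distrib, Finset.sum_const, Finset.card_range]
      push_cast [nsmul_eq_mul]
      ring)) hh)
  have hlin (j : ℕ) (hj : j ≤ q) :
      ∃ u ∈ twistedForm R m (1, f q - e j), evalAtZero (a q) (b q) 1 u = v j :=
    evalAtZero.exists_linear_eq (H.monic_a q) (by rw [H.natDegree_a]; exact H.b_mem q)
      (H.isCoprime q) (by rw [H.natDegree_a]; linarith [he hj])
      (by rw [H.natDegree_a]; exact hv j hj)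
  choose! u hu huv using hlin
  refine ⟨u, hu, ?_⟩
  rw [map_sum]
  refine Finset.sum_congr rfl fun j hj => ?_
  have hjq := Finset.mem_range_succ_iff.1 hj
  have hl (r : ℕ) := twistedForm.natDegree_le (H.linearForms_mem r)
  have hs (r : ℕ) := twistedForm.natDegree_le (H.C_s_mem r)
  rw [evalAtZero.map_mul _ _ (pathWeight.natDegree_le hl hs hjq)
    (twistedForm.natDegree_le (hu j hjq)), huv j hjq, pathWeight.map_evalAtZero _ _ hl hs hjq]
  simp [linearForms]

theorem exists_sum_bidiagonalCofactor_eq (H : GenericBidiagonal m e f a b s) (he : Monotone e)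
    (hf : Monotone f) (n : ℕ) {P : R[X][X]}
    (hP : P ∈ twistedForm R m (n + 1, ∑ r ∈ Finset.range (n + 1), (f r - e r))) :
    ∃ u : ℕ → ℕ → R[X][X], (∀ i, ∀ j ≤ i, u i j ∈ twistedForm R m (1, f i - e j)) ∧
      ∑ i ∈ Finset.range (n + 1), ∑ j ∈ Finset.range (i + 1),
        bidiagonalCofactor (linearForms a b) (C ∘ s) (n + 1) i j * u i j = P := by
  induction n generalizing P with
  | zero =>
    refine ⟨fun i => if i = 0 then fun _ => P else 0, fun i j hj => ?_,
      by simp [bidiagonalCofactor, pathWeight]⟩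
    rcases i with _ | i
    · simpa [Nat.le_zero.1 hj] using hP
    · exact zero_mem _
  | succ q ih =>
    obtain ⟨u, hu, huP⟩ := H.exists_evalAtZero_sum_eq he hf
      (evalAtZero.mem_intDegreeLE (H.a_mem (q + 1)) (H.b_mem (q + 1)) hP)
    have hsub := sub_mem hP (H.sum_pathWeight_mul_mem hu)
    obtain ⟨Q, hQ⟩ := evalAtZero.dvd_of_eq_zero (H.isCoprime (q + 1))
      (twistedForm.natDegree_le hsub) (by rw [map_sub, huP, sub_self])
    rw [hQ] at hsub
    have hQmem := twistedForm.mem_of_C_add_C_mul_X_mul_mem (H.monic_a (q + 1))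
      (by rw [H.natDegree_a]; exact H.b_mem _) hsub
    rw [H.natDegree_a, Finset.sum_range_succ, add_sub_cancel_right] at hQmem
    obtain ⟨w, hw, rfl⟩ := ih hQmem
    refine ⟨Function.update w (q + 1) u, fun i j hj => ?_, ?_⟩
    · rcases eq_or_ne i (q + 1) with rfl | hi
      · rw [Function.update_self]
        exact hu j hj
      · rw [Function.update_of_ne hi]
        exact hw i j hj
    · rw [Finset.sum_range_succ, Function.update_self, eq_add_of_sub_eq hQ, Finset.mul_sum]
      simp only [bidiagonalCofactor_last, add_left_inj]
      refine Finset.sum_congr rfl fun i hi => ?_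
      have hi' := Finset.mem_range.1 hi
      simp only [Function.update_of_ne hi'.ne, bidiagonalCofactor_succ _ _ hi', mul_assoc,
        Finset.mul_sum, linearForms]

end GenericBidiagonal

/-- The `n × n` upper bidiagonal matrix with diagonal entries `l r` and superdiagonal entries
`-s r`; with this sign its cofactors are products of the `l r` and the `s r`. -/
def bidiagonal {R : Type*} [Ring R] (l s : ℕ → R) (n : ℕ) : Matrix (Fin n) (Fin n) R :=
  .of fun r c => if (c : ℕ) = r then l r else if (c : ℕ) = r + 1 then -s r else 0

theorem bidiagonalCofactor_mul_left_of_lt {M : Type*} [CommMonoid M] (l s : ℕ → M) {n i j : ℕ}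
    (h : j < i) :
    s j * bidiagonalCofactor l s n i (j + 1) = l j * bidiagonalCofactor l s n i j := by
  rw [bidiagonalCofactor, bidiagonalCofactor, ← mul_assoc, ← mul_assoc, mul_comm (s j),
    mul_comm (l j), pathWeight.succ_left_mul l s h]

theorem mul_bidiagonalCofactor_self {M : Type*} [CommMonoid M] (l s : ℕ → M) {n i : ℕ}
    (h : i < n) : l i * bidiagonalCofactor l s n i i = ∏ r ∈ Finset.range n, l r := by
  rw [bidiagonalCofactor, pathWeight.self, mul_left_comm, ← Finset.prod_eq_prod_Ico_succ_bot h,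
    Finset.prod_range_mul_prod_Ico _ h.le]

theorem map_bidiagonalCofactor {M N : Type*} [CommMonoid M] [CommMonoid N] (φ : M →* N)
    (l s : ℕ → M) (n i j : ℕ) :
    φ (bidiagonalCofactor l s n i j) = bidiagonalCofactor (φ ∘ l) (φ ∘ s) n i j := by
  simp [bidiagonalCofactor, pathWeight]

namespace bidiagonal

theorem map {R S : Type*} [Ring R] [Ring S] (φ : R →+* S) (l s : ℕ → R) (n : ℕ) :
    (bidiagonal l s n).map φ = bidiagonal (φ ∘ l) (φ ∘ s) n := by
  ext r c
  simp [bidiagonal, apply_ite φ]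

theorem sum_mul {R : Type*} [Ring R] (l s : ℕ → R) {n : ℕ} (r : Fin n) {g : ℕ → R}
    (hg : g n = 0) : ∑ c, bidiagonal l s n r c * g c = l r * g r - s r * g (r + 1) := by
  have hr := r.isLt
  have hrange : ∑ c, bidiagonal l s n r c * g c = ∑ c ∈ Finset.range (n + 1),
      (if c = (r : ℕ) then l r else if c = r + 1 then -s r else 0) * g c := by
    rw [Finset.sum_range_succ, hg, mul_zero, add_zero, Finset.sum_range]
    rfl
  rw [hrange, Finset.sum_eq_add_of_mem (r : ℕ) (r + 1) (Finset.mem_range.2 (by omega))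
    (Finset.mem_range.2 (by omega)) (by omega) fun c _ hc => by simp [hc.1, hc.2]]
  simp [sub_eq_add_neg]

variable {R : Type*} [CommRing R]

theorem det (l s : ℕ → R) (n : ℕ) : (bidiagonal l s n).det = ∏ r ∈ Finset.range n, l r := by
  rw [Matrix.det_of_isUpperTriangular, Finset.prod_range]
  · simp [bidiagonal]
  · intro r c (hrc : c < r)
    have : (c : ℕ) < r := hrc
    rw [bidiagonal, Matrix.of_apply, if_neg (by omega), if_neg (by omega)]

theorem mul_cofactors (l s : ℕ → R) (n : ℕ) :
    bidiagonal l s n * .of (fun j i : Fin n =>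
      if (j : ℕ) ≤ i then bidiagonalCofactor l s n i j else 0) =
    (bidiagonal l s n).det • (1 : Matrix (Fin n) (Fin n) R) := by
  ext r i
  simp only [Matrix.mul_apply, Matrix.of_apply]
  rw [sum_mul l s r (g := fun j => if j ≤ (i : ℕ) then bidiagonalCofactor l s n i j else 0)
    (if_neg i.isLt.not_ge), Matrix.smul_apply, Matrix.one_apply, det]
  simp only [Fin.ext_iff]
  rcases lt_trichotomy (r : ℕ) i with h | h | h
  · rw [if_pos h.le, if_pos (by omega), if_neg h.ne, bidiagonalCofactor_mul_left_of_lt l s h]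
    simp
  · rw [if_pos h.le, if_neg (by omega), if_pos h, h, mul_bidiagonalCofactor_self l s i.isLt]
    simp
  · rw [if_neg (by omega), if_neg (by omega), if_neg h.ne']
    simp

theorem adjugate_of_isLeftRegular {l s : ℕ → R} {n : ℕ}
    (h : IsLeftRegular (bidiagonal l s n).det) :
    (bidiagonal l s n).adjugate = .of fun j i : Fin n =>
      if (j : ℕ) ≤ i then bidiagonalCofactor l s n i j else 0 :=
  (Matrix.isRegular_of_isLeftRegular_det h).left
    ((Matrix.mul_adjugate _).trans (mul_cofactors l s n).symm)

-- The formula is an identity of integer polynomials, so it suffices to check it generically.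
theorem adjugate (l s : ℕ → R) (n : ℕ) :
    (bidiagonal l s n).adjugate = .of fun j i : Fin n =>
      if (j : ℕ) ≤ i then bidiagonalCofactor l s n i j else 0 := by
  let φ : MvPolynomial (ℕ ⊕ ℕ) ℤ →+* R := (MvPolynomial.aeval (Sum.elim l s)).toRingHom
  let L (r : ℕ) : MvPolynomial (ℕ ⊕ ℕ) ℤ := .X (.inl r)
  let S (r : ℕ) : MvPolynomial (ℕ ⊕ ℕ) ℤ := .X (.inr r)
  have hL : φ ∘ L = l := by ext; simp [φ, L]
  have hS : φ ∘ S = s := by ext; simp [φ, S]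
  have hdet : (bidiagonal L S n).det ≠ 0 := by
    rw [det]
    exact Finset.prod_ne_zero_iff.2 fun r _ => MvPolynomial.X_ne_zero _
  have hcof (i j : ℕ) : φ (bidiagonalCofactor L S n i j) = bidiagonalCofactor l s n i j := by
    simpa [hL, hS] using map_bidiagonalCofactor (φ : MvPolynomial (ℕ ⊕ ℕ) ℤ →* R) L S n i j
  have hgen := congrArg φ.mapMatrix
    (adjugate_of_isLeftRegular (IsLeftCancelMulZero.mul_left_cancel_of_ne_zero hdet))
  rw [RingHom.map_adjugate, RingHom.mapMatrix_apply, map, hL, hS] at hgen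
  rw [hgen]
  ext j i
  simp [apply_ite φ, hcof]

theorem trace_adjugate_mul (l s : ℕ → R) (n : ℕ) (u : ℕ → ℕ → R) :
    ((bidiagonal l s n).adjugate *
      Matrix.of fun i j : Fin n => if (j : ℕ) ≤ i then u i j else 0).trace =
      ∑ i ∈ Finset.range n, ∑ j ∈ Finset.range (i + 1), bidiagonalCofactor l s n i j * u i j := by
  simp only [adjugate, Matrix.trace, Matrix.diag_apply, Matrix.mul_apply, Matrix.of_apply,
    ite_zero_mul_ite_zero, and_self]
  rw [Finset.sum_comm, Finset.sum_range]
  refine Finset.sum_congr rfl fun i _ => ?_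
  rw [Fin.sum_univ_eq_sum_range
      fun j => if j ≤ (i : ℕ) then bidiagonalCofactor l s n i j * u i j else 0,
    ← Finset.sum_filter]
  congr 1
  ext j
  simp only [Finset.mem_filter, Finset.mem_range]
  omega

end bidiagonal

theorem sum_det_updateRow {ι R : Type*} [Fintype ι] [DecidableEq ι] [CommRing R]
    (M N : Matrix ι ι R) : ∑ i, (M.updateRow i (N i)).det = (M.adjugate * N).trace := by
  rw [Matrix.trace_mul_comm, Matrix.trace]
  refine Finset.sum_congr rfl fun i _ => ?_
  rw [← Matrix.cramer_transpose_apply, Matrix.cramer_eq_adjugate_mulVec,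
    ← Matrix.adjugate_transpose, Matrix.mulVec_transpose]
  rfl

theorem sq_dvd_det_add_smul_sub {ι R : Type*} [Fintype ι] [DecidableEq ι] [CommRing R]
    (M N : Matrix ι ι R) (x : R) :
    x ^ 2 ∣ (M + x • N).det - (M.det + x * (M.adjugate * N).trace) := by
  have hlin : ∑ i, (M.updateRow i (x • N i)).det = x * (M.adjugate * N).trace := by
    simp only [Matrix.det_updateRow_smul, ← Finset.mul_sum, sum_det_updateRow]
  have htaylor : (M + x • N).det = M.det + ∑ i, (M.updateRow i (x • N i)).det +
      ∑ s : Finset ι with 2 ≤ s.card, (Matrix.of (s.piecewise (x • N).row M.row)).det := by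
    have :=
      Matrix.detRowAlternating.toMultilinearMap.map_add_eq_map_add_linearDeriv_add M.row (x • N).row
    rw [MultilinearMap.linearDeriv_apply] at this
    exact this
  rw [htaylor, hlin, add_sub_cancel_left]
  refine Finset.dvd_sum fun s hs => ?_
  have hscale : Matrix.of (s.piecewise (x • N).row M.row) = Matrix.of fun i j =>
      s.piecewise (fun _ => x) (fun _ => 1) i * Matrix.of (s.piecewise N.row M.row) i j := by
    ext i j
    by_cases hi : i ∈ s <;> simp [hi]
  rw [hscale, Matrix.det_mul_column, Finset.prod_piecewise]
  simp only [Finset.univ_inter, Finset.prod_const, one_pow, mul_one]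
  exact (pow_dvd_pow x (Finset.mem_filter.1 hs).2).mul_right _

section Curves

variable {σ R : Type*}

theorem aeval_mul_left_of_isHomogeneous {A : Type*} [CommSemiring R] [CommSemiring A] [Algebra R A]
    {p : MvPolynomial σ R} {n : ℕ} (hp : p.IsHomogeneous n) (a : A) (x : σ → A) :
    MvPolynomial.aeval (fun s => a * x s) p = a ^ n * MvPolynomial.aeval x p := by
  simp only [MvPolynomial.aeval_def, MvPolynomial.eval₂_eq, Finset.mul_sum]
  refine Finset.sum_congr rfl fun d hd => ?_
  have hdeg : ∑ i ∈ d.support, d i = n := by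
    simpa [Finsupp.weight_apply, Finsupp.sum] using hp (MvPolynomial.mem_support_iff.1 hd)
  simp only [mul_pow, Finset.prod_mul_distrib, Finset.prod_pow_eq_pow_sum, hdeg]
  ring

theorem eval_aeval [CommSemiring R] (γ : σ → R[X]) (c : R) (p : MvPolynomial σ R) :
    (MvPolynomial.aeval γ p).eval c = MvPolynomial.eval (fun s => (γ s).eval c) p := by
  rw [← coe_evalRingHom, MvPolynomial.map_aeval]
  congr 2
  ext
  simp

theorem coeff_aeval_X_mul [CommRing R] {p : MvPolynomial σ R} {n : ℕ}
    (hp : ∀ i < n, MvPolynomial.homogeneousComponent i p = 0) (q : σ → R[X]) :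
    (MvPolynomial.aeval (fun s => X * q s) p).coeff n =
      MvPolynomial.eval (fun s => (q s).coeff 0) (MvPolynomial.homogeneousComponent n p) := by
  have hcomp (i : ℕ) : (MvPolynomial.aeval (fun s => X * q s)
      (MvPolynomial.homogeneousComponent i p)).coeff n = if i = n then
        MvPolynomial.eval (fun s => (q s).coeff 0) (MvPolynomial.homogeneousComponent n p)
      else 0 := by
    rw [aeval_mul_left_of_isHomogeneous (MvPolynomial.homogeneousComponent_isHomogeneous i p),
      coeff_X_pow_mul']
    rcases lt_trichotomy i n with hin | rfl | hin
    · simp [hp i hin, hin.ne]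
    · simp only [le_refl, if_true, Nat.sub_self, coeff_zero_eq_eval_zero, eval_aeval]
    · rw [if_neg hin.not_ge, if_neg hin.ne']
  conv_lhs => rw [← MvPolynomial.sum_homogeneousComponent p]
  rw [map_sum, finsetSum_coeff, Finset.sum_congr rfl fun i _ => hcomp i, Finset.sum_ite_eq',
    ite_eq_left_iff]
  intro hn
  rw [MvPolynomial.homogeneousComponent_eq_zero n p (by simpa using hn), map_zero]

variable [CommRing R] [IsDomain R] [Infinite R]

theorem eq_zero_of_aeval_X_mul_eq_zero {p : MvPolynomial σ R}
    (h : ∀ w : σ → R, ∃ q : σ → R[X],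
      (∀ s, (q s).coeff 0 = w s) ∧ MvPolynomial.aeval (fun s => X * q s) p = 0) : p = 0 := by
  have hcomp (n : ℕ) : MvPolynomial.homogeneousComponent n p = 0 := by
    induction n using Nat.strong_induction_on with
    | _ n ih =>
      refine MvPolynomial.funext fun w => ?_
      obtain ⟨q, hq, hqp⟩ := h w
      rw [← funext hq, ← coeff_aeval_X_mul ih, hqp, coeff_zero, map_zero]
  rw [← MvPolynomial.sum_homogeneousComponent p, Finset.sum_eq_zero fun n _ => hcomp n]

theorem eq_zero_of_aeval_curves_eq_zero {p : MvPolynomial σ R} (z : σ → R)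
    (h : ∀ w : σ → R, ∃ γ : σ → R[X], (∀ s, (γ s).coeff 0 = z s) ∧ (∀ s, (γ s).coeff 1 = w s) ∧
      MvPolynomial.aeval γ p = 0) : p = 0 := by
  have htranslate : MvPolynomial.aeval
      (fun s => (MvPolynomial.X s + MvPolynomial.C (z s) : MvPolynomial σ R)) p = 0 := by
    refine eq_zero_of_aeval_X_mul_eq_zero fun w => ?_
    obtain ⟨γ, hz, hw, hγ⟩ := h w
    refine ⟨fun s => (γ s).divX, fun s => by rw [coeff_divX, zero_add, hw], ?_⟩
    rw [← AlgHom.comp_apply, MvPolynomial.comp_aeval, ← hγ]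
    congr 2
    funext s
    simp [← hz, X_mul_divX_add]
  have hinverse := congrArg (MvPolynomial.aeval
    fun s => (MvPolynomial.X s - MvPolynomial.C (z s) : MvPolynomial σ R)) htranslate
  rw [← AlgHom.comp_apply, MvPolynomial.comp_aeval, map_zero] at hinverse
  simpa using hinverse

end Curves

section Determinant

variable {ι R A : Type*} [Fintype ι] [DecidableEq ι] [CommRing R] [CommRing A] [Algebra R A]

theorem exists_coeff_eq_map_coeff (L : A →ₗ[R] R) (P : A[X]) :
    ∃ p : R[X], (∀ i, p.coeff i = L (P.coeff i)) ∧
      ∀ c, p.eval c = L (P.eval (algebraMap R A c)) := by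
  refine ⟨∑ i ∈ P.support, monomial i (L (P.coeff i)), fun i => ?_, fun c => ?_⟩
  · simp +contextual [finsetSum_coeff, coeff_monomial]
  · rw [eval_finsetSum, eval_eq_sum, Polynomial.sum, map_sum]
    refine Finset.sum_congr rfl fun i _ => ?_
    rw [eval_monomial, ← map_pow, mul_comm (P.coeff i), ← Algebra.smul_def, map_smul, smul_eq_mul,
      mul_comm]

theorem exists_coeff_eq_map_det (L : A →ₗ[R] R) (M N : Matrix ι ι A) :
    ∃ p : R[X], p.coeff 0 = L M.det ∧ p.coeff 1 = L (M.adjugate * N).trace ∧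
      ∀ c, p.eval c = L (M + c • N).det := by
  obtain ⟨p, hcoeff, heval⟩ :=
    exists_coeff_eq_map_coeff L (M.map C + (X : A[X]) • N.map C).det
  have hlow (d : ℕ) (hd : d < 2) : (M.map C + (X : A[X]) • N.map C).det.coeff d =
      (C M.det + X * C (M.adjugate * N).trace).coeff d := by
    have hdvd := sq_dvd_det_add_smul_sub (M.map C) (N.map C) X
    rw [X_pow_dvd_iff] at hdvd
    rw [← sub_eq_zero, ← coeff_sub, ← hdvd d hd]
    simp only [← RingHom.mapMatrix_apply, ← RingHom.map_det, ← RingHom.map_adjugate, ← map_mul]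
    simp only [RingHom.mapMatrix_apply, ← AddMonoidHom.map_trace (C : A →+* A[X])]
  refine ⟨p, ?_, ?_, fun c => ?_⟩
  · simp [hcoeff, hlow]
  · simp [hcoeff, hlow, coeff_C]
  · rw [heval, ← coe_evalRingHom, RingHom.map_det]
    congr 2
    ext i j
    simp [Algebra.smul_def c (N i j), mul_comm (N i j)]

theorem eq_zero_of_eval_det_eq_zero [IsDomain R] [Infinite R] {σ : Type*} (ψ : MvPolynomial σ R)
    (L : σ → A →ₗ[R] R) (V : Submodule R (Matrix ι ι A)) {M : Matrix ι ι A} (hM : M ∈ V)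
    (hsurj : ∀ w : σ → R, ∃ N ∈ V, ∀ s, L s (M.adjugate * N).trace = w s)
    (hψ : ∀ Q ∈ V, MvPolynomial.eval (fun s => L s Q.det) ψ = 0) : ψ = 0 := by
  refine eq_zero_of_aeval_curves_eq_zero (fun s => L s M.det) fun w => ?_
  obtain ⟨N, hN, hw⟩ := hsurj w
  choose γ h0 h1 heval using fun s => exists_coeff_eq_map_det (L s) M N
  refine ⟨γ, h0, fun s => (h1 s).trans (hw s), Polynomial.funext fun c => ?_⟩
  rw [eval_aeval, eval_zero, ← hψ _ (V.add_mem hM (V.smul_mem c hN))]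
  simp only [heval]

end Determinant

theorem isHomogeneous_det {ι σ R : Type*} [Fintype ι] [DecidableEq ι] [CommRing R] {d : ℕ}
    {M : Matrix ι ι (MvPolynomial σ R)} (hM : ∀ i j, (M i j).IsHomogeneous d) :
    M.det.IsHomogeneous (Fintype.card ι * d) := by
  rw [Matrix.det_apply]
  refine MvPolynomial.IsHomogeneous.sum _ _ _ fun g _ => ?_
  rw [Units.smul_def, zsmul_eq_mul, ← map_intCast (MvPolynomial.C (R := R) (σ := σ))]
  refine MvPolynomial.IsHomogeneous.C_mul ?_ _
  simpa using MvPolynomial.IsHomogeneous.prod Finset.univ _ (fun _ => d) fun i _ => hM (g i) i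

theorem coeff_det_C_mul_X_add_C_mul_X {R : Type*} [CommRing R] {k : ℕ} (j : Fin (k + 1))
    (A B : Matrix (Fin k) (Fin k) R) :
    MvPolynomial.coeff
      (Finsupp.single (0 : Fin 2) (j : ℕ) + Finsupp.single (1 : Fin 2) (k - (j : ℕ)))
      (Matrix.det (Matrix.of fun r c : Fin k =>
        MvPolynomial.C (A r c) * MvPolynomial.X 0 + MvPolynomial.C (B r c) * MvPolynomial.X 1)) =
      (Matrix.det (Matrix.of fun r c : Fin k => C (B r c) + C (A r c) * X)).coeff j := by
  have hhom : (Matrix.det (Matrix.of fun r c : Fin k =>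
      MvPolynomial.C (σ := Fin 2) (A r c) * MvPolynomial.X 0 +
        MvPolynomial.C (B r c) * MvPolynomial.X 1)).IsHomogeneous k := by
    convert isHomogeneous_det (d := 1) fun r c => ?_
    · simp
    · exact (MvPolynomial.isHomogeneous_C_mul_X (A r c) 0).add
        (MvPolynomial.isHomogeneous_C_mul_X (B r c) 1)
  rw [← homogenize_eq_of_isHomogeneous hhom rfl, coeff_homogenize, if_pos (by simp; omega),
    AlgHom.map_det]
  congr 2
  · ext r c : 2
    simp [add_comm]
  · simp

theorem twistedForm.exists_coeff_eq {R : Type*} [Semiring R] {k m : ℕ} {d : ℤ} (hd : 0 ≤ d)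
    (w : ((j : Fin (k + 1)) × Fin ((d + (((k - (j : ℕ)) * m : ℕ) : ℤ)).toNat + 1)) → R) :
    ∃ P ∈ twistedForm R m (k, d), ∀ s, (P.coeff (s.1 : ℕ)).coeff (s.2 : ℕ) = w s := by
  refine ⟨∑ s, monomial (s.1 : ℕ) (monomial (s.2 : ℕ) (w s)),
    sum_mem fun s _ => monomial_mem (Nat.lt_succ_iff.1 s.1.2) ?_ _, fun s => ?_⟩
  · have := s.2.2
    rw [← Nat.cast_mul]
    omega
  · rw [finsetSum_coeff, finsetSum_coeff, Finset.sum_eq_single s]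
    · rw [coeff_monomial_same, coeff_monomial_same]
    · rintro ⟨j, n⟩ - hne
      rw [coeff_monomial]
      split_ifs with hj
      · obtain rfl : j = s.1 := Fin.ext hj
        exact coeff_monomial_of_ne _ fun hn => hne (Sigma.ext rfl (heq_of_eq (Fin.ext hn.symm)))
      · exact coeff_zero _
    · exact fun h => absurd (Finset.mem_univ s) h

/-- The dehomogenizations `A * X + B` of the pencils `A * x + B * y` of the determinant map, with
the columns in reverse order. -/
def twistedMatrix (R : Type*) [Semiring R] (m : ℕ) {ι : Type*} (e f : ι → ℤ) :
    Submodule R (Matrix ι ι R[X][X]) where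
  carrier := {M | ∀ r c, M r c ∈ twistedForm R m (1, f r - e c)}
  zero_mem' _ _ := zero_mem _
  add_mem' hM hN r c := add_mem (hM r c) (hN r c)
  smul_mem' x _ hM r c := Submodule.smul_mem _ x (hM r c)

namespace GenericBidiagonal

variable {R : Type*} [CommRing R] {m : ℕ} {e f : ℕ → ℤ} {a b s : ℕ → R[X]}

theorem bidiagonal_mem (H : GenericBidiagonal m e f a b s) (n : ℕ) :
    bidiagonal (linearForms a b) (C ∘ s) n ∈
      twistedMatrix R m (fun i : Fin n => e i) (fun i => f i) := by
  intro r c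
  simp only [bidiagonal, Matrix.of_apply]
  split_ifs with hdiag hsuper
  · rw [hdiag]
    exact H.linearForms_mem r
  · rw [hsuper]
    exact neg_mem (H.C_s_mem r)
  · exact zero_mem _

theorem exists_trace_adjugate_mul_eq (H : GenericBidiagonal m e f a b s) (he : Monotone e)
    (hf : Monotone f) (n : ℕ) {P : R[X][X]}
    (hP : P ∈ twistedForm R m (n + 1, ∑ i : Fin (n + 1), (f i - e i))) :
    ∃ N ∈ twistedMatrix R m (fun i : Fin (n + 1) => e i) (fun i => f i),
      ((bidiagonal (linearForms a b) (C ∘ s) (n + 1)).adjugate * N).trace = P := by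
  rw [Fin.sum_univ_eq_sum_range (fun i => f i - e i)] at hP
  obtain ⟨u, hu, rfl⟩ := H.exists_sum_bidiagonalCofactor_eq he hf n hP
  refine ⟨_, fun r c => ?_, bidiagonal.trace_adjugate_mul _ _ _ u⟩
  rw [Matrix.of_apply]
  split_ifs with hcr
  · exact hu r c hcr
  · exact zero_mem _

end GenericBidiagonal

namespace twistedMatrix

theorem exists_trace_adjugate_mul_eq {F : Type*} [Field F] [Infinite F] {n m : ℕ}
    {e f : Fin (n + 1) → ℤ} (he : Monotone e) (hf : Monotone f) (hef : ∀ i, e i ≤ f i)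
    (hefm : ∀ i : Fin n, e i.succ - m ≤ f i.castSucc) :
    ∃ M ∈ twistedMatrix F m e f, ∀ P ∈ twistedForm F m (n + 1, ∑ i, (f i - e i)),
      ∃ N ∈ twistedMatrix F m e f, (M.adjugate * N).trace = P := by
  have hclamp (i : Fin (n + 1)) : Fin.clamp i n = i := Fin.ext (by simp; omega)
  have hefm' (r : ℕ) : e (Fin.clamp (r + 1) n) - m ≤ f (Fin.clamp r n) := by
    rcases lt_or_ge r n with hr | hr
    · convert hefm ⟨r, hr⟩ using 3 <;> ext <;> simp <;> omega
    · rw [Fin.clamp_eq_last _ _ hr, Fin.clamp_eq_last _ _ (hr.trans r.le_succ)]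
      linarith [hef (Fin.last n)]
  obtain ⟨a, b, s, H⟩ := exists_genericBidiagonal (F := F) (m := m)
    (e := fun r => e (Fin.clamp r n)) (f := fun r => f (Fin.clamp r n)) (fun r => hef _) hefm'
  have hM := H.bidiagonal_mem (n + 1)
  have hN (P : F[X][X]) := H.exists_trace_adjugate_mul_eq (he.comp Fin.clamp_monotone)
    (hf.comp Fin.clamp_monotone) n (P := P)
  simp only [hclamp] at hM hN
  exact ⟨_, hM, hN⟩

theorem det_reverse_columns {R : Type*} [CommRing R] {k m : ℕ} {e f : Fin k → ℤ}
    {Q : Matrix (Fin k) (Fin k) R[X][X]} (hQ : Q ∈ twistedMatrix R m e f) :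
    (Matrix.of fun r c : Fin k =>
      C ((Q r c.rev).coeff 0) + C ((Q r c.rev).coeff 1) * X).det =
      Equiv.Perm.sign (Fin.revPerm (n := k)) • Q.det := by
  rw [Units.smul_def, zsmul_eq_mul, ← Matrix.det_permute']
  congr 1
  ext1 r c
  exact twistedForm.C_coeff_zero_add_C_coeff_one_mul_X (hQ r c.rev)

end twistedMatrix

theorem stmt_6_general {F : Type*} [Field F] [Infinite F] (k : ℕ) (hk : 1 ≤ k) (m : ℕ)
    (e f : Fin k → ℤ) (he : Monotone e) (hf : Monotone f)
    (hef : ∀ i, e i ≤ f i)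
    (hefm : ∀ i : Fin k, ∀ h : (i : ℕ) + 1 < k, e ⟨(i : ℕ) + 1, h⟩ - (m : ℤ) ≤ f i)
    (δ : ℤ) (hδ : δ = ∑ i, (f i - e i))
    (ψ : MvPolynomial ((j : Fin (k + 1)) × Fin ((δ + (((k - (j : ℕ)) * m : ℕ) : ℤ)).toNat + 1)) F)
    (hψ : ∀ A B : Matrix (Fin k) (Fin k) (Polynomial F),
      (∀ r c : Fin k, ∀ n : ℕ, f r - e c.rev < (n : ℤ) → (A r c).coeff n = 0) →
      (∀ r c : Fin k, ∀ n : ℕ, f r - e c.rev + (m : ℤ) < (n : ℤ) → (B r c).coeff n = 0) →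
      MvPolynomial.eval (fun s =>
        ((MvPolynomial.coeff
            (Finsupp.single (0 : Fin 2) ((s.1 : ℕ)) + Finsupp.single (1 : Fin 2) (k - (s.1 : ℕ)))
            (Matrix.det (Matrix.of fun r c : Fin k =>
              MvPolynomial.C (A r c) * MvPolynomial.X 0 +
                MvPolynomial.C (B r c) * MvPolynomial.X 1))).coeff (s.2 : ℕ))) ψ = 0) :
    ψ = 0 := by
  obtain ⟨n, rfl⟩ := Nat.exists_eq_add_of_le' hk
  obtain ⟨M, hM, hsurj⟩ := twistedMatrix.exists_trace_adjugate_mul_eq (F := F) he hf hef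
    fun i => hefm i.castSucc (Nat.succ_lt_succ i.2)
  let ε : ℤˣ := Equiv.Perm.sign (Fin.revPerm (n := n + 1))
  refine eq_zero_of_eval_det_eq_zero ψ
    (fun s => ε • (lcoeff F s.2 ∘ₗ (lcoeff F[X] s.1).restrictScalars F)) _ hM (fun w => ?_)
    fun Q hQ => ?_
  · obtain ⟨P, hP, hPw⟩ := twistedForm.exists_coeff_eq (m := m) (k := n + 1)
      (hδ ▸ Finset.sum_nonneg fun i _ => sub_nonneg.2 (hef i)) fun s => ε • w s
    obtain ⟨N, hN, rfl⟩ := hsurj P (hδ ▸ hP)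
    refine ⟨N, hN, fun s => ?_⟩
    simp [hPw, smul_smul]
  · have hQψ := hψ (Matrix.of fun r c => (Q r c.rev).coeff 1)
      (Matrix.of fun r c => (Q r c.rev).coeff 0)
      (fun r c d hd => twistedForm.coeff_mem (hQ r c.rev) 1 d (by push_cast; linarith))
      (fun r c d hd => twistedForm.coeff_mem (hQ r c.rev) 0 d (by push_cast; linarith))
    simp only [coeff_det_C_mul_X_add_C_mul_X] at hQψ
    simp only [Matrix.of_apply, twistedMatrix.det_reverse_columns hQ, coeff_smul] at hQψ
    exact hQψ

/-- Dominance of the determinant map `φ` (Lemma 3.2).  `V` is the space of pairs `(A, B)` of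
`k × k` matrices over `F[t]` with `deg A r c ≤ f r - e (k+1-c)` and
`deg B r c ≤ f r - e (k+1-c) + m` (encoded via vanishing of coefficients beyond the bound),
and `φ (A, B)` is the tuple of coefficients `P_j ∈ F[t]` of `det (A·x + B·y) = Σ P_j x^j y^(k-j)`,
a point of the space `W` of tuples `(P_0, …, P_k)` with `deg P_j ≤ δ + (k-j)·m`.  A polynomial
function `ψ` on `W` (a polynomial in the coefficient-coordinates of `W`) vanishing on the image
of `φ` is zero. -/
theorem stmt_6 {F : Type*} [Field F] [IsAlgClosed F] (k : ℕ) (hk : 1 ≤ k) (m : ℕ)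
    (e f : Fin k → ℤ) (he : Monotone e) (hf : Monotone f)
    (hef : ∀ i, e i ≤ f i)
    (hefm : ∀ i : Fin k, ∀ h : (i : ℕ) + 1 < k, e ⟨(i : ℕ) + 1, h⟩ - (m : ℤ) ≤ f i)
    (δ : ℤ) (hδ : δ = ∑ i, (f i - e i))
    (ψ : MvPolynomial ((j : Fin (k + 1)) × Fin ((δ + (((k - (j : ℕ)) * m : ℕ) : ℤ)).toNat + 1)) F)
    (hψ : ∀ A B : Matrix (Fin k) (Fin k) (Polynomial F),
      (∀ r c : Fin k, ∀ n : ℕ, f r - e c.rev < (n : ℤ) → (A r c).coeff n = 0) →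
      (∀ r c : Fin k, ∀ n : ℕ, f r - e c.rev + (m : ℤ) < (n : ℤ) → (B r c).coeff n = 0) →
      MvPolynomial.eval (fun s =>
        ((MvPolynomial.coeff
            (Finsupp.single (0 : Fin 2) ((s.1 : ℕ)) + Finsupp.single (1 : Fin 2) (k - (s.1 : ℕ)))
            (Matrix.det (Matrix.of fun r c : Fin k =>
              MvPolynomial.C (A r c) * MvPolynomial.X 0 +
                MvPolynomial.C (B r c) * MvPolynomial.X 1))).coeff (s.2 : ℕ))) ψ = 0) :
    ψ = 0 :=
  stmt_6_general k hk m e f he hf hef hefm δ hδ ψ hψ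
end

section
/- Let F be an algebraically closed field, m ≥ 0 an integer, and e_1 ≤ e_2, f_1, f_2 integers with f_1 ≥ e_1, f_2 ≥ e_2, and f_1 ≥ e_2 − m; set δ = (f_1 + f_2) − (e_1 + e_2). Then for all homogeneous polynomials P_2, P_1, P_0 ∈ F[s,t] of degrees δ, δ + m, δ + 2m respectively, there exist homogeneous polynomials A_{12}, A_{21}, A_{22}, B_{11}, B_{12}, B_{21} ∈ F[s,t] of degrees f_1 − e_1, f_2 − e_2, f_2 − e_1, f_1 − e_2 + m, f_1 − e_1 + m, f_2 − e_2 + m respectively such that −A_{21}·A_{12} = P_2, B_{11}·A_{22} − A_{12}·B_{21} − A_{21}·B_{12} = P_1, and −B_{21}·B_{12} = P_0; equivalently, the determinant of the 2×2 matrix with rows (B_{11}·y, A_{12}·x + B_{12}·y) and (A_{21}·x + B_{21}·y, A_{22}·x) equals P_2·x² + P_1·xy + P_0·y². -/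
/-!
Over an algebraically closed field every binary form of degree `a + b` is a product of forms of
degrees `a` and `b`: setting the second variable to `1` gives a univariate polynomial of degree at
most `a + b`, whose linear factors can be distributed, and homogenizing restores the form. Hence one
may first factor `-P₂ = A₂₁ A₁₂` and `-P₀ = B₂₁ B₁₂` arbitrarily; as `B₁₁` and `A₂₂` occur only in
the middle coefficient, it remains to factor `P₁ + A₁₂ B₂₁ + A₂₁ B₁₂ = B₁₁ A₂₂`.
-/

theorem exists_multiset_add_eq_of_card_le_add {α : Type*} {a b : ℕ} (s : Multiset α)
    (hs : s.card ≤ a + b) :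
    ∃ t u : Multiset α, t.card ≤ a ∧ u.card ≤ b ∧ t + u = s := by
  induction s using Quotient.inductionOn with
  | h l =>
    rw [Multiset.quot_mk_to_coe, Multiset.coe_card] at hs
    refine ⟨l.take a, l.drop a, by simp, ?_, by simp⟩
    rw [Multiset.coe_card, List.length_drop]
    lia

section CommSemiring

variable {R : Type*} [CommSemiring R] {a b n : ℕ}

open Polynomial

theorem natDegree_multisetProd_X_add_C [Nontrivial R] (s : Multiset R) :
    (s.map (X + C ·)).prod.natDegree = s.card := by
  rw [natDegree_multiset_prod_of_monic _
    (Multiset.forall_mem_map_iff.2 fun c _ ↦ monic_X_add_C c), Multiset.map_map]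
  simp

theorem exists_mul_eq_of_splits_of_natDegree_le_add {p : R[X]} (hp : p.Splits)
    (hdeg : p.natDegree ≤ a + b) :
    ∃ q r : R[X], q.natDegree ≤ a ∧ r.natDegree ≤ b ∧ q * r = p := by
  rcases eq_or_ne p 0 with rfl | hp0
  · exact ⟨0, 0, by simp, by simp, by simp⟩
  have : Nontrivial R := nontrivial_iff.mp ⟨p, 0, hp0⟩
  obtain ⟨s, hps⟩ := splits_iff_exists_multiset'.mp hp
  have hmonic : (s.map (X + C ·)).prod.Monic :=
    monic_multiset_prod_of_monic s _ fun c _ ↦ monic_X_add_C c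
  have hcard : p.natDegree = s.card := by
    rw [hps, natDegree_C_mul_of_mul_ne_zero (by simpa [hmonic.leadingCoeff] using hp0),
      natDegree_multisetProd_X_add_C]
  obtain ⟨t, u, ht, hu, rfl⟩ := exists_multiset_add_eq_of_card_le_add s (hcard ▸ hdeg)
  refine ⟨C p.leadingCoeff * (t.map (X + C ·)).prod, (u.map (X + C ·)).prod, ?_, ?_, ?_⟩
  · exact (natDegree_C_mul_le _ _).trans ((natDegree_multisetProd_X_add_C t).trans_le ht)
  · exact (natDegree_multisetProd_X_add_C u).trans_le hu
  · rw [mul_assoc, ← Multiset.prod_add, ← Multiset.map_add, ← hps]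

theorem natDegree_aeval_X_one_le {P : MvPolynomial (Fin 2) R} (hP : P.totalDegree ≤ n) :
    (MvPolynomial.aeval ![X, (1 : R[X])] P).natDegree ≤ n := by
  simpa only [mul_one] using MvPolynomial.aeval_natDegree_le P hP ![X, (1 : R[X])] (n := 1)
    (by simp [Fin.forall_fin_two, natDegree_X_le])

theorem exists_isHomogeneous_mul_eq_of_splits {P : MvPolynomial (Fin 2) R}
    (hP : P.IsHomogeneous (a + b)) (hsplits : (MvPolynomial.aeval ![X, (1 : R[X])] P).Splits) :
    ∃ Q S : MvPolynomial (Fin 2) R, Q.IsHomogeneous a ∧ S.IsHomogeneous b ∧ Q * S = P := by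
  obtain ⟨q, r, hq, hr, hqr⟩ := exists_mul_eq_of_splits_of_natDegree_le_add hsplits
    (natDegree_aeval_X_one_le hP.totalDegree_le)
  refine ⟨q.homogenize a, r.homogenize b, isHomogeneous_homogenize q,
    isHomogeneous_homogenize r, ?_⟩
  rw [← homogenize_mul q r hq hr, homogenize_eq_of_isHomogeneous hP hqr.symm]

end CommSemiring

section IsAlgClosed

variable {F : Type*} [Field F] [IsAlgClosed F]

theorem exists_isHomogeneous_mul_eq {a b n : ℕ} {P : MvPolynomial (Fin 2) F}
    (hP : P.IsHomogeneous n) (hn : n = a + b) :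
    ∃ Q S : MvPolynomial (Fin 2) F, Q.IsHomogeneous a ∧ S.IsHomogeneous b ∧ Q * S = P :=
  exists_isHomogeneous_mul_eq_of_splits (hn ▸ hP) (IsAlgClosed.splits _)

theorem stmt_7_general {a₁₂ a₂₁ a₂₂ b₁₁ b₁₂ b₂₁ n₂ n₁ n₀ : ℕ}
    (hn₂ : n₂ = a₂₁ + a₁₂) (hn₁ : n₁ = b₁₁ + a₂₂) (hab : a₁₂ + b₂₁ = n₁)
    (hba : a₂₁ + b₁₂ = n₁) (hn₀ : n₀ = b₂₁ + b₁₂)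
    {P₂ P₁ P₀ : MvPolynomial (Fin 2) F} (hP₂ : P₂.IsHomogeneous n₂)
    (hP₁ : P₁.IsHomogeneous n₁) (hP₀ : P₀.IsHomogeneous n₀) :
    ∃ A₁₂ A₂₁ A₂₂ B₁₁ B₁₂ B₂₁ : MvPolynomial (Fin 2) F,
      A₁₂.IsHomogeneous a₁₂ ∧ A₂₁.IsHomogeneous a₂₁ ∧ A₂₂.IsHomogeneous a₂₂ ∧
      B₁₁.IsHomogeneous b₁₁ ∧ B₁₂.IsHomogeneous b₁₂ ∧ B₂₁.IsHomogeneous b₂₁ ∧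
      -(A₂₁ * A₁₂) = P₂ ∧
      B₁₁ * A₂₂ - A₁₂ * B₂₁ - A₂₁ * B₁₂ = P₁ ∧
      -(B₂₁ * B₁₂) = P₀ := by
  obtain ⟨A₂₁, A₁₂, hA₂₁, hA₁₂, hA⟩ := exists_isHomogeneous_mul_eq hP₂.neg hn₂
  obtain ⟨B₂₁, B₁₂, hB₂₁, hB₁₂, hB⟩ := exists_isHomogeneous_mul_eq hP₀.neg hn₀
  have hmiddle : (P₁ + A₁₂ * B₂₁ + A₂₁ * B₁₂).IsHomogeneous n₁ :=
    (hP₁.add (hab ▸ hA₁₂.mul hB₂₁)).add (hba ▸ hA₂₁.mul hB₁₂)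
  obtain ⟨B₁₁, A₂₂, hB₁₁, hA₂₂, hAB⟩ := exists_isHomogeneous_mul_eq hmiddle hn₁
  refine ⟨A₁₂, A₂₁, A₂₂, B₁₁, B₁₂, B₂₁, hA₁₂, hA₂₁, hA₂₂, hB₁₁, hB₁₂, hB₂₁, ?_, ?_, ?_⟩
  · rw [hA, neg_neg]
  · rw [hAB]
    ring
  · rw [hB, neg_neg]

end IsAlgClosed

/-- Surjectivity of the determinant map `φ²` in the case `k = 2`: given integers
`e₁ ≤ e₂`, `f₁ ≥ e₁`, `f₂ ≥ e₂`, `f₁ ≥ e₂ - m` and `δ = (f₁ + f₂) - (e₁ + e₂)`, every triple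
of binary forms `P₂, P₁, P₀ ∈ F[s,t]` of degrees `δ, δ + m, δ + 2m` arises as
`(-A₂₁A₁₂, B₁₁A₂₂ - A₁₂B₂₁ - A₂₁B₁₂, -B₂₁B₁₂)` for binary forms of the prescribed degrees,
i.e. as the coefficients of `det ((B₁₁y, A₁₂x + B₁₂y), (A₂₁x + B₂₁y, A₂₂x))`. -/
theorem stmt_7 {F : Type*} [Field F] [IsAlgClosed F] (m : ℕ)
    (e₁ e₂ f₁ f₂ : ℤ) (he : e₁ ≤ e₂) (h1 : e₁ ≤ f₁) (h2 : e₂ ≤ f₂)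
    (h3 : e₂ - (m : ℤ) ≤ f₁)
    (δ : ℤ) (hδ : δ = (f₁ + f₂) - (e₁ + e₂))
    (P₂ P₁ P₀ : MvPolynomial (Fin 2) F)
    (hP₂ : P₂.IsHomogeneous δ.toNat)
    (hP₁ : P₁.IsHomogeneous (δ + (m : ℤ)).toNat)
    (hP₀ : P₀.IsHomogeneous (δ + 2 * (m : ℤ)).toNat) :
    ∃ A₁₂ A₂₁ A₂₂ B₁₁ B₁₂ B₂₁ : MvPolynomial (Fin 2) F,
      A₁₂.IsHomogeneous (f₁ - e₁).toNat ∧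
      A₂₁.IsHomogeneous (f₂ - e₂).toNat ∧
      A₂₂.IsHomogeneous (f₂ - e₁).toNat ∧
      B₁₁.IsHomogeneous (f₁ - e₂ + (m : ℤ)).toNat ∧
      B₁₂.IsHomogeneous (f₁ - e₁ + (m : ℤ)).toNat ∧
      B₂₁.IsHomogeneous (f₂ - e₂ + (m : ℤ)).toNat ∧
      -(A₂₁ * A₁₂) = P₂ ∧
      B₁₁ * A₂₂ - A₁₂ * B₂₁ - A₂₁ * B₁₂ = P₁ ∧
      -(B₂₁ * B₁₂) = P₀ := by
  exact stmt_7_general (by lia) (by lia) (by lia) (by lia) (by lia) hP₂ hP₁ hP₀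
end
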